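/- arXiv:math/9712288 — 9 statements merged into one kernel-verified Lean document; each statement's English description precedes it below -/
import Mathlib

section
/- For all integers m ≥ 2 and n ≥ 2, the covering numbers of the Mycielski ideals satisfy cov(𝔐_m) = cov(𝔐_n). -/
/-!
For all `m, n ≥ 2` there is a map `Φ : n^ω → m^ω` under which preimages of sets in `𝔐_m` lie in
`𝔐_n`; pulling back a cover of `m^ω` gives `cov(𝔐_n) ≤ cov(𝔐_m)`, and the theorem follows by
symmetry.

To build `Φ`, index the coordinates of `m^ω` by tuples `t ∈ ω^m` instead of by `ω`, and let
`Φ(f)(t)` be the element of `m` coded by the tuple `(f(t 0), …, f(t (m-1))) ∈ n^m`, for a fixed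
surjection `n^m → m`. Inside an infinite `X ⊆ ω` there are infinitely many pairwise disjoint
injective tuples `t₀, t₁, …`. The values of `Φ(f)` at these tuples are determined by `f↾X` and can
be prescribed independently of each other, so if `Φ⁻¹(A)` restricts onto `n^X`, then `A` restricts
onto `m^{t₀, t₁, …}`.
-/

open Cardinal

/-- The set of restrictions to `X` of members of `A`. -/
def restrictSet {k : ℕ} (A : Set (ℕ → Fin k)) (X : Set ℕ) : Set (↥X → Fin k) :=
  {g | ∃ f ∈ A, ∀ x : X, f ↑x = g x}

/-- The Mycielski ideal `𝔐ₖ`: all `A ⊆ k^ω` such that for every infinite `X ⊆ ω`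
the set of restrictions of members of `A` to `X` is not all of `X → k`. -/
def Mycielski (k : ℕ) : Set (Set (ℕ → Fin k)) :=
  {A | ∀ X : Set ℕ, X.Infinite → restrictSet A X ≠ Set.univ}

/-- The covering number of a family `I` of subsets of `α`: the least cardinality
of a subfamily of `I` whose union is all of `α`. -/
noncomputable def covNum {α : Type} (I : Set (Set α)) : Cardinal :=
  sInf {c : Cardinal | ∃ S : Set (Set α), S ⊆ I ∧ ⋃₀ S = Set.univ ∧ #S = c}

/-- The code in `n^m` of an element `a` of `m`: its indicator function. -/
def indicatorCode (m n : ℕ) (hn : 2 ≤ n) (a : Fin m) : Fin m → Fin n :=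
  fun i => if i = a then ⟨1, by omega⟩ else ⟨0, by omega⟩

lemma indicatorCode_injective (m n : ℕ) (hn : 2 ≤ n) :
    Function.Injective (indicatorCode m n hn) := by
  intro a b h
  by_contra hab
  have := congrFun h a
  simp [indicatorCode, hab] at this

/-- The map `Φ : n^ω → m^ω`: the coordinate `t : ℕ` is read as a tuple in `ω^m`, and `f` along that
tuple is decoded to an element of `m`. -/
noncomputable def tupleMap (m n : ℕ) (hm : 2 ≤ m) (hn : 2 ≤ n) (f : ℕ → Fin n) : ℕ → Fin m :=
  haveI : Nonempty (Fin m) := ⟨⟨0, by omega⟩⟩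
  fun t => Function.invFun (indicatorCode m n hn)
    fun i => f (((Encodable.decode t : Option (Fin m → ℕ)).getD 0) i)

lemma tupleMap_encode (m n : ℕ) (hm : 2 ≤ m) (hn : 2 ≤ n) (f : ℕ → Fin n) (t : Fin m → ℕ)
    (a : Fin m) (h : ∀ i, f (t i) = indicatorCode m n hn a i) :
    tupleMap m n hm hn f (Encodable.encode t) = a := by
  have : Nonempty (Fin m) := ⟨⟨0, by omega⟩⟩
  simp only [tupleMap, Encodable.encodek, Option.getD_some, h]
  exact Function.leftInverse_invFun (indicatorCode_injective m n hn) a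

lemma preimage_tupleMap_mem (m n : ℕ) (hm : 2 ≤ m) (hn : 2 ≤ n) (A : Set (ℕ → Fin m))
    (hA : A ∈ Mycielski m) : tupleMap m n hm hn ⁻¹' A ∈ Mycielski n := by
  intro X hX hfull
  have := hX.to_subtype
  let x : ℕ ↪ X := Infinite.natEmbedding X
  -- the `k`-th of the pairwise disjoint tuples in `X`
  let t : ℕ → Fin m → ℕ := fun k i => x (Nat.pair k i)
  have ht : Function.Injective fun k => Encodable.encode (t k) := by
    intro k l h
    have h1 := congrFun (Encodable.encode_injective h) ⟨0, by omega⟩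
    have h2 := x.injective (Subtype.ext h1)
    exact (Nat.pair_eq_pair.1 h2).1
  refine hA (Set.range fun k => Encodable.encode (t k)) (Set.infinite_range_of_injective ht) ?_
  refine Set.eq_univ_of_forall fun g => ?_
  let v : ℕ → Fin m := fun k => g ⟨_, Set.mem_range_self k⟩
  -- values on `X` coding `g` along every tuple; values off the tuples are irrelevant
  let h : X → Fin n := Function.extend x
    (fun p => if hp : (Nat.unpair p).2 < m then
      indicatorCode m n hn (v (Nat.unpair p).1) ⟨(Nat.unpair p).2, hp⟩ else ⟨0, by omega⟩)
    fun _ => ⟨0, by omega⟩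
  have hh : h ∈ restrictSet (tupleMap m n hm hn ⁻¹' A) X := hfull ▸ Set.mem_univ h
  obtain ⟨f, hfA, hf⟩ := hh
  refine ⟨_, hfA, ?_⟩
  rintro ⟨_, k, rfl⟩
  refine tupleMap_encode m n hm hn f (t k) (v k) fun i => ?_
  refine (hf (x (Nat.pair k i))).trans ?_
  simp only [h]
  rw [x.injective.extend_apply]
  simp

/-- Singletons lie in `𝔐ₖ`, so the set whose infimum defines the covering number is nonempty. -/
lemma singleton_mem_Mycielski (k : ℕ) (hk : 2 ≤ k) (f : ℕ → Fin k) : {f} ∈ Mycielski k := by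
  intro X hX h
  obtain ⟨x, hx⟩ := hX.nonempty
  have : Nontrivial (Fin k) := Fin.nontrivial_iff_two_le.2 hk
  obtain ⟨b, hb⟩ := exists_ne (f x)
  have hg : (fun _ => b) ∈ restrictSet {f} X := h ▸ Set.mem_univ _
  obtain ⟨f', rfl, hf'⟩ := hg
  exact hb (hf' ⟨x, hx⟩).symm

lemma covNum_Mycielski_le (m n : ℕ) (hm : 2 ≤ m) (hn : 2 ≤ n) :
    covNum (Mycielski n) ≤ covNum (Mycielski m) := by
  refine le_csInf ⟨_, Set.range fun f : ℕ → Fin m => {f}, ?_, ?_, rfl⟩ ?_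
  · rintro _ ⟨f, rfl⟩
    exact singleton_mem_Mycielski m hm f
  · exact Set.eq_univ_of_forall fun f => ⟨{f}, ⟨f, rfl⟩, rfl⟩
  · rintro _ ⟨S, hS, hcov, rfl⟩
    refine le_trans ?_ (mk_image_le (f := Set.preimage (tupleMap m n hm hn)) (s := S))
    refine csInf_le' ⟨_, ?_, ?_, rfl⟩
    · rintro _ ⟨A, hA, rfl⟩
      exact preimage_tupleMap_mem m n hm hn A (hS hA)
    · refine Set.eq_univ_of_forall fun f => ?_
      have hf : tupleMap m n hm hn f ∈ ⋃₀ S := hcov ▸ Set.mem_univ _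
      obtain ⟨A, hA, hfA⟩ := hf
      exact ⟨_, ⟨A, hA, rfl⟩, hfA⟩

/-- For all integers `m, n ≥ 2`, the covering numbers of the Mycielski ideals
satisfy `cov(𝔐_m) = cov(𝔐_n)`. -/
theorem covNum_Mycielski_eq (m n : ℕ) (hm : 2 ≤ m) (hn : 2 ≤ n) :
    covNum (Mycielski m) = covNum (Mycielski n) :=
  le_antisymm (covNum_Mycielski_le n m hn hm) (covNum_Mycielski_le m n hm hn)
end

section
/- Let k ≥ 2, let β : ω → [ω]² be a bijection from ω onto the two-element subsets of ω, and for n ∈ ω let β_s(n) and β_g(n) denote the smaller and the larger element of β(n). For a partial function f from ω to k and a partial function g from ω to k², write f ≡_β g if (1) β(n) ∩ β(m) = ∅ for all distinct n, m ∈ dom(g), and (2) g(n) = k·f(β_s(n)) + f(β_g(n)) for all n ∈ dom(g) (in particular β(n) ⊆ dom(f) for n ∈ dom(g)). Suppose A ⊆ (k²)^ω and Φ witnesses that A ∈ 𝔐_{k²}. Then the set A* = {f ∈ k^ω : for all infinite X ⊆ ω and all infinite Z ⊆ ω, f↾X is not ≡_β-related to Φ(Z)} belongs to the Mycielski ideal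 𝔐_k. -/
/-- `f↾X ≡_β g`, where `β(n) = {βs n, βg n}` is an enumeration of `[ω]²`,
`f : ℕ → k` is restricted to `X`, and `g` is a partial function from `ω` to `k²`
with domain `Z`:  (1) the pairs `β(n)` for `n ∈ dom g` are pairwise disjoint, and
(2) for every `n ∈ dom g`, `β(n) ⊆ X` and `g n = k·f(βs n) + f(βg n)`. -/
def equivBeta (k : ℕ) (βs βg : ℕ → ℕ) (X : Set ℕ) (f : ℕ → Fin k)
    (Z : Set ℕ) (g : ↥Z → Fin (k ^ 2)) : Prop :=
  (∀ n m : Z, n ≠ m → ({βs ↑n, βg ↑n} : Set ℕ) ∩ {βs ↑m, βg ↑m} = ∅) ∧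
  ∀ n : Z, βs ↑n ∈ X ∧ βg ↑n ∈ X ∧
    (g n : ℕ) = k * (f (βs ↑n) : ℕ) + (f (βg ↑n) : ℕ)

/-- Let `β : ω → [ω]²` be a bijection, given by `n ↦ {βs n, βg n}` with
`βs n < βg n`.  If `Φ` witnesses that `A ∈ 𝔐_{k²}`, then
`A* = {f ∈ k^ω : for all infinite X, Z ⊆ ω, f↾X is not ≡_β-related to Φ Z}`
belongs to the Mycielski ideal `𝔐_k`. -/
theorem star_mem_Mycielski (k : ℕ) (hk : 2 ≤ k) (βs βg : ℕ → ℕ)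
    (hlt : ∀ n, βs n < βg n)
    (hbij : ∀ a b : ℕ, a < b → ∃! n, βs n = a ∧ βg n = b)
    (A : Set (ℕ → Fin (k ^ 2)))
    (Φ : (Z : Set ℕ) → (↥Z → Fin (k ^ 2)))
    (hΦ : ∀ Z : Set ℕ, Z.Infinite → ∀ h ∈ A, (fun z : Z => h ↑z) ≠ Φ Z) :
    {f : ℕ → Fin k | ∀ X Z : Set ℕ, X.Infinite → Z.Infinite →
        ¬ equivBeta k βs βg X f Z (Φ Z)} ∈ Mycielski k := by
  intro X hX huniv
  have : Infinite X := hX.to_subtype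
  let e : ℕ ≃o X := Nat.Subtype.orderIsoOfNat X
  have he : ∀ i j, ((e i : X) : ℕ) = e j → i = j := fun i j h => e.injective (Subtype.ext h)
  have hcode : ∀ i : ℕ, ∃ n, βs n = e (2 * i) ∧ βg n = e (2 * i + 1) := fun i =>
    (hbij _ _ (e.strictMono (Nat.lt_succ_self (2 * i)))).exists
  choose n hs hg using hcode
  have hninj : Function.Injective n := fun i j hij => by
    have := he (2 * i) (2 * j) (by rw [← hs, ← hs, hij])
    omega
  let Z : Set ℕ := Set.range n
  have hZ : Z.Infinite := Set.infinite_range_of_injective hninj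
  let v : ℕ → Fin (k ^ 2) := fun i => Φ Z ⟨n i, i, rfl⟩
  -- The base-`k` digits of the values `v i`, listed along the enumeration of `X`.
  let F : ℕ → Fin k := fun j =>
    if j % 2 = 0 then
      ⟨v (j / 2) / k, Nat.div_lt_of_lt_mul ((v (j / 2)).isLt.trans_eq (pow_two k))⟩
    else ⟨v (j / 2) % k, Nat.mod_lt _ (by omega)⟩
  have hFe : ∀ i, (F (2 * i) : ℕ) = v i / k := fun i => by simp [F]
  have hFo : ∀ i, (F (2 * i + 1) : ℕ) = v i % k := fun i => by
    have h : (2 * i + 1) / 2 = i := by omega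
    simp [F, Nat.add_mod, h]
  obtain ⟨f, hf, hfF⟩ : (fun x : X => F (e.symm x)) ∈ restrictSet _ X :=
    huniv ▸ Set.mem_univ _
  have hfe : ∀ j, f (e j) = F j := fun j => by simpa using hfF (e j)
  refine hf X Z hX hZ ⟨?_, ?_⟩
  · rintro ⟨_, i, rfl⟩ ⟨_, j, rfl⟩ hij
    have hne : i ≠ j := fun h => hij (by subst h; rfl)
    ext x
    simp only [hs, hg, Set.mem_inter_iff, Set.mem_insert_iff, Set.mem_singleton_iff,
      Set.mem_empty_iff_false, iff_false, not_and]
    rintro (rfl | rfl) (h | h) <;> have := he _ _ h <;> omega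
  · rintro ⟨_, i, rfl⟩
    refine ⟨?_, ?_, ?_⟩
    · rw [hs]; exact (e _).2
    · rw [hg]; exact (e _).2
    · simp only [hs, hg, hfe, hFe, hFo]
      exact (Nat.div_add_mod _ _).symm
end

section
/- Let k ≥ 2, let β : ω → [ω]² be a bijection from ω onto the two-element subsets of ω, with β_s(n) and β_g(n) the smaller and larger element of β(n), and define ≡_β as follows: for a partial function f from ω to k and a partial function g from ω to k², f ≡_β g if β(n) ∩ β(m) = ∅ for all distinct n, m ∈ dom(g) and g(n) = k·f(β_s(n)) + f(β_g(n)) for all n ∈ dom(g). Suppose 𝒜 is a family of subsets of (k²)^ω whose union is all of (k²)^ω, and for each A ∈ 𝒜 the function Φ_A witnesses that A ∈ 𝔐_{k²}. For A ∈ 𝒜 set A* = {f ∈ k^ω : for all infinite X, Z ⊆ ω, f↾X is not ≡_β-related to Φ_A(Z)}. Then the union of {A* : A ∈ 𝒜} is all of k^ω. -/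
/-- Let `β : ω → [ω]²` be a bijection, given by `n ↦ {βs n, βg n}` with
`βs n < βg n`.  Suppose `𝒜` is a cover of `(k²)^ω` and for each `A ∈ 𝒜`,
`Φ A` witnesses that `A ∈ 𝔐_{k²}`.  Then the sets
`A* = {f ∈ k^ω : for all infinite X, Z ⊆ ω, f↾X is not ≡_β-related to Φ A Z}`
for `A ∈ 𝒜` cover `k^ω`. -/
theorem star_covers (k : ℕ) (hk : 2 ≤ k) (βs βg : ℕ → ℕ)
    (hlt : ∀ n, βs n < βg n)
    (hbij : ∀ a b : ℕ, a < b → ∃! n, βs n = a ∧ βg n = b)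
    (𝒜 : Set (Set (ℕ → Fin (k ^ 2))))
    (hcov : ⋃₀ 𝒜 = Set.univ)
    (Φ : Set (ℕ → Fin (k ^ 2)) → (Z : Set ℕ) → (↥Z → Fin (k ^ 2)))
    (hΦ : ∀ A ∈ 𝒜, ∀ Z : Set ℕ, Z.Infinite → ∀ h ∈ A, (fun z : Z => h ↑z) ≠ Φ A Z) :
    (⋃ A ∈ 𝒜, {f : ℕ → Fin k | ∀ X Z : Set ℕ, X.Infinite → Z.Infinite →
        ¬ equivBeta k βs βg X f Z (Φ A Z)}) = Set.univ := by
  refine Set.eq_univ_of_forall fun f => ?_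
  have hlt' : ∀ n, k * (f (βs n) : ℕ) + (f (βg n) : ℕ) < k ^ 2 := fun n => by
    have h1 := (f (βs n)).isLt
    have h2 := (f (βg n)).isLt
    nlinarith
  -- The total function that codes `f` along `β`; any member of the cover containing it works.
  let h : ℕ → Fin (k ^ 2) := fun n => ⟨k * (f (βs n) : ℕ) + (f (βg n) : ℕ), hlt' n⟩
  obtain ⟨A, hA, hhA⟩ : h ∈ ⋃₀ 𝒜 := hcov ▸ Set.mem_univ h
  refine Set.mem_biUnion hA fun X Z _ hZ hequiv => hΦ A hA Z hZ h hhA ?_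
  funext n
  exact Fin.ext (hequiv.2 n).2.2.symm
end

section
/- If i and j are integers with i ≥ j ≥ 2, then cov(ℜ_i) ≤ cov(ℜ_j); that is, the covering number of the Rosłanowski ideal on i^ω is at most the covering number of the Rosłanowski ideal on j^ω. -/
/-!
Fix a surjection `φ : i → j` and consider `Φ : i^ω → j^ω`, `f ↦ φ ∘ f`. The preimage under `Φ` of
a set in `ℜ_j` lies in `ℜ_i` (`preimage_mem_Ros`): given `g ∈ PF_i`, extend `φ ∘ g` to a witness
`h ∈ PF_j`, and let `g'` be `g` on its domain and a lift of `h` elsewhere. Then `φ ∘ g'` and `h`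
agree up to finitely many points, so `g' ⊆* f` would give `h ⊆* φ ∘ f`. Pulling back a cover of
`j^ω` therefore gives a cover of `i^ω` of at most the same cardinality.

As the infimum of the empty set of cardinals is `0`, the inequality also needs some cover of `j^ω`
by sets of `ℜ_j` to exist. The singletons form one because `j ≥ 2` (`singleton_mem_Ros`).
-/

open Cardinal

/-- `PF k`: partial functions from `ω` to `k` (encoded as functions
`ℕ → Option (Fin k)`) whose domain is coinfinite. -/
def PF (k : ℕ) : Set (ℕ → Option (Fin k)) :=
  {g | {n | g n = none}.Infinite}

/-- `g ⊆* f` for partial functions: for all but finitely many `x` in the domain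
of `g`, `x` is in the domain of `f` and `f x = g x`. -/
def SubStar {k : ℕ} (g f : ℕ → Option (Fin k)) : Prop :=
  {x | (g x).isSome ∧ f x ≠ g x}.Finite

/-- A total function `ℕ → Fin k` regarded as a partial function. -/
def toPartial {k : ℕ} (f : ℕ → Fin k) : ℕ → Option (Fin k) := fun n => some (f n)

/-- The Rosłanowski ideal `ℜₖ`: all `A ⊆ k^ω` such that for every `g ∈ PF k`
there is `g' ∈ PF k` with `g ⊆* g'` and `g' ⊄* f` for every `f ∈ A`. -/
def Ros (k : ℕ) : Set (Set (ℕ → Fin k)) :=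
  {A | ∀ g ∈ PF k, ∃ g' ∈ PF k, SubStar g g' ∧ ∀ f ∈ A, ¬ SubStar g' (toPartial f)}

/-- Preimages of sets of `ℜ_j` under composition with a map `φ : i → j` that has a right inverse
`ψ` belong to `ℜ_i`. -/
lemma preimage_mem_Ros {i j : ℕ} (φ : Fin i → Fin j) (ψ : Fin j → Fin i)
    (hφ : ∀ y, φ (ψ y) = y) {A : Set (ℕ → Fin j)} (hA : A ∈ Ros j) :
    {f : ℕ → Fin i | (fun n => φ (f n)) ∈ A} ∈ Ros i := by
  intro g hg
  obtain ⟨h, hh, hgh, hhA⟩ := hA (fun n => (g n).map φ) (by simpa [PF] using hg)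
  refine ⟨fun n => (g n).or ((h n).map ψ), ?_, ?_, ?_⟩
  · -- Off the finite set where `φ ∘ g ⊆ h` fails, `h` undefined forces `g` undefined.
    refine (Set.Infinite.sdiff hh hgh).mono ?_
    rintro n ⟨hn, hn'⟩
    simp only [Set.mem_ofPred_eq] at hn hn' ⊢
    cases hgn : g n <;> simp_all
  · refine Set.finite_empty.subset ?_
    rintro n ⟨hn, hn'⟩
    cases hgn : g n <;> simp_all
  · intro f hf hsub
    refine hhA _ hf ((hgh.union hsub).subset ?_)
    rintro n ⟨hn, hn'⟩
    by_contra hcon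
    simp only [Set.mem_union, Set.mem_ofPred_eq, not_or, not_and, not_not, toPartial] at hcon hn'
    cases hgn : g n <;> cases hhn : h n <;> simp_all

lemma singleton_mem_Ros {k : ℕ} (hk : 2 ≤ k) (f : ℕ → Fin k) : {f} ∈ Ros k := by
  classical
  intro g hg
  have : Nontrivial (Fin k) := Fin.nontrivial_iff_two_le.mpr hk
  choose o ho using fun a : Fin k => exists_ne a
  -- Split the complement of the domain of `g` into two infinite parts by parity of the index:
  -- `g'` takes values different from those of `f` on the even part, and is undefined on the rest.
  let e := Set.Infinite.natEmbedding _ hg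
  have he : ∀ n, g (e n) = none := fun n => (e n).2
  have hinj : ∀ m n, (e m : ℕ) = e n → m = n := fun m n h => e.injective (Subtype.ext h)
  let D : Set ℕ := Set.range fun n => (e (2 * n) : ℕ)
  refine ⟨fun n => (g n).or (if n ∈ D then some (o (f n)) else none), ?_, ?_, ?_⟩
  · refine Set.infinite_of_injective_forall_mem (f := fun n => (e (2 * n + 1) : ℕ)) ?_ ?_
    · intro m n h
      have := hinj _ _ h
      omega
    · intro n
      have : (e (2 * n + 1) : ℕ) ∉ D := by
        rintro ⟨m, hm⟩
        have := hinj _ _ hm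
        omega
      simp [he, this]
  · refine Set.finite_empty.subset ?_
    rintro n ⟨hn, hn'⟩
    cases hgn : g n <;> simp_all
  · rintro f' rfl
    refine Set.infinite_of_injective_forall_mem (f := fun n => (e (2 * n) : ℕ)) ?_ ?_
    · intro m n h
      have := hinj _ _ h
      omega
    · intro n
      have : (e (2 * n) : ℕ) ∈ D := ⟨n, rfl⟩
      simp [he, this, toPartial, (ho _).symm]

/-- If `i ≥ j ≥ 2` then `cov(ℜ_i) ≤ cov(ℜ_j)`. -/
theorem covNum_Ros_mono (i j : ℕ) (hj : 2 ≤ j) (hij : j ≤ i) :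
    covNum (Ros i) ≤ covNum (Ros j) := by
  have : Nonempty (Fin j) := ⟨⟨0, by omega⟩⟩
  refine le_csInf ⟨_, Set.range (fun f => {f}), ?_, ?_, rfl⟩ ?_
  · rintro _ ⟨f, rfl⟩
    exact singleton_mem_Ros hj f
  · exact Set.eq_univ_of_forall fun f => ⟨{f}, ⟨f, rfl⟩, rfl⟩
  · rintro _ ⟨S, hS, hcov, rfl⟩
    let φ : Fin i → Fin j := Function.invFun (Fin.castLE hij)
    have hφ : ∀ y, φ (Fin.castLE hij y) = y :=
      Function.leftInverse_invFun (Fin.castLE_injective hij)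
    let P : Set (ℕ → Fin j) → Set (ℕ → Fin i) := fun A => {f | (fun n => φ (f n)) ∈ A}
    refine le_trans (b := #(P '' S)) (csInf_le' ⟨P '' S, ?_, ?_, rfl⟩) mk_image_le
    · rintro _ ⟨A, hA, rfl⟩
      exact preimage_mem_Ros φ _ hφ (hS hA)
    · refine Set.eq_univ_of_forall fun f => ?_
      obtain ⟨A, hA, hf⟩ := hcov.symm ▸ Set.mem_univ (fun n => φ (f n))
      exact ⟨P A, ⟨A, hA, rfl⟩, hf⟩
end

section
/- Let k ≥ 2 and suppose A ∈ 𝔐_k. Then for every infinite X ⊆ ω there is a function g : X → k such that for every f ∈ A the set {x ∈ X : f(x) ≠ g(x)} is infinite. -/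
/-- If `A ∈ 𝔐_k` then for every infinite `X ⊆ ω` there is `g : X → k` such that
every `f ∈ A` differs from `g` at infinitely many points of `X`. -/
theorem Mycielski_infinite_diff (k : ℕ) (hk : 2 ≤ k)
    (A : Set (ℕ → Fin k)) (hA : A ∈ Mycielski k) :
    ∀ X : Set ℕ, X.Infinite → ∃ g : ↥X → Fin k,
      ∀ f ∈ A, {x : ↥X | f ↑x ≠ g x}.Infinite := by
  intro X hX
  have : Infinite X := hX.to_subtype
  -- The `n`-th piece consists of the points whose first coordinate under `e` is `n`.
  obtain ⟨e⟩ : Nonempty (X ≃ ℕ × ℕ) := nonempty_equiv_of_countable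
  have hmiss : ∀ n : ℕ, ∃ h : X → Fin k, ∀ f ∈ A, ∃ x : X, (e x).1 = n ∧ f x ≠ h x := by
    intro n
    let P : Set ℕ := Set.range fun m : ℕ => (e.symm (n, m) : ℕ)
    have hP : P.Infinite := Set.infinite_range_of_injective fun a b hab => by
      simpa using e.symm.injective (Subtype.ext hab)
    obtain ⟨p, hp⟩ := (Set.ne_univ_iff_exists_notMem _).1 (hA P hP)
    have hmem : ∀ x : X, (e x).1 = n → (x : ℕ) ∈ P := by
      rintro x rfl
      exact ⟨(e x).2, by simp⟩
    classical
    -- Outside the piece the values of `h` are irrelevant.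
    refine ⟨fun x => if hx : (x : ℕ) ∈ P then p ⟨x, hx⟩ else ⟨0, by omega⟩, fun f hf => ?_⟩
    by_contra! hcon
    refine hp ⟨f, hf, ?_⟩
    rintro ⟨_, m, rfl⟩
    have h1 := hcon (e.symm (n, m)) (by simp)
    rwa [dif_pos (hmem _ (by simp))] at h1
  choose h hh using hmiss
  refine ⟨fun x => h (e x).1 x, fun f hf => ?_⟩
  refine Set.Infinite.of_image (fun x => (e x).1) ?_
  convert Set.infinite_univ (α := ℕ)
  refine Set.eq_univ_of_forall fun n => ?_
  obtain ⟨x, rfl, hx⟩ := hh n f hf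
  exact ⟨x, hx, rfl⟩
end

section
/- For every integer k ≥ 2, the Mycielski ideal is contained in the Rosłanowski ideal: 𝔐_k ⊆ ℜ_k. Consequently cov(ℜ_k) ≤ cov(𝔐_k). -/
/-!
Let `A` be in the Mycielski ideal and let `g` be a partial function with domain having the infinite complement
`Z = {n | g n = none}`. Cut out of `Z` pairwise disjoint infinite sets `X₀, X₁, …`. On each `Xₙ` some
function `hₙ : Xₙ → k` is not the restriction of any member of `A`. Put `g' = g ∪ ⋃ₙ hₙ₊₁`; its domain
misses `X₀`, so `g'` is again in `PF k`. Every `f ∈ A` disagrees with `g'` at a point of each `Xₙ₊₁`,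
hence at infinitely many points.

The inequality of covering numbers is monotonicity of the infimum. As `sInf ∅ = 0` for cardinals, it also
requires that the Mycielski ideal covers `k^ω`, which holds because it contains all singletons when `2 ≤ k`.
-/

open Cardinal

/-- If `A` is in the Mycielski ideal, every infinite set, given as the range of an injective sequence `e`,
carries a function that differs somewhere from each member of `A`. -/
lemma exists_avoiding {k : ℕ} {A : Set (ℕ → Fin k)} (hA : A ∈ Mycielski k) {e : ℕ → ℕ}
    (he : Function.Injective e) : ∃ h : ℕ → Fin k, ∀ f ∈ A, ∃ m, f (e m) ≠ h m := by
  obtain ⟨h, hh⟩ := (Set.ne_univ_iff_exists_notMem _).1 (hA _ (Set.infinite_range_of_injective he))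
  refine ⟨fun m => h ⟨e m, m, rfl⟩, fun f hf => ?_⟩
  by_contra! hc
  refine hh ⟨f, hf, ?_⟩
  rintro ⟨_, m, rfl⟩
  exact hc m

lemma mycielski_subset_ros (k : ℕ) : Mycielski k ⊆ Ros k := by
  intro A hA g hg
  let e := Set.Infinite.natEmbedding _ hg
  have he_none : ∀ n, g (e n) = none := fun n => (e n).2
  -- `φ (n, ·)` enumerates the set `Xₙ`.
  let φ : ℕ × ℕ → ℕ := fun p => e (Nat.pair p.1 p.2)
  have hφ : Function.Injective φ := by
    rintro ⟨a, b⟩ ⟨c, d⟩ h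
    have := e.injective (Subtype.ext h)
    simpa [Nat.pair_eq_pair] using this
  have hφ_row : ∀ n, Function.Injective fun m => φ (n, m) := fun n a b h => by
    simpa using hφ h
  choose H hH using fun n => exists_avoiding hA (hφ_row n)
  let ψ : ℕ × ℕ → ℕ := fun p => φ (p.1 + 1, p.2)
  have hψ : Function.Injective ψ := by
    rintro ⟨a, b⟩ ⟨c, d⟩ h
    simpa using hφ h
  let g' : ℕ → Option (Fin k) := Function.extend ψ (fun p => some (H (p.1 + 1) p.2)) g
  have hg'ψ : ∀ n m, g' (ψ (n, m)) = some (H (n + 1) m) := fun n m => hψ.extend_apply _ _ (n, m)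
  refine ⟨g', ?_, ?_, ?_⟩
  · refine (Set.infinite_range_of_injective (hφ_row 0)).mono ?_
    rintro _ ⟨m, rfl⟩
    have hm : ¬ ∃ p, ψ p = φ (0, m) := by
      rintro ⟨p, hp⟩
      simpa using hφ hp
    exact (Function.extend_apply' _ _ _ hm).trans (he_none _)
  · refine Set.Finite.subset Set.finite_empty ?_
    rintro x ⟨hx, hne⟩
    refine hne (Function.extend_apply' _ _ _ ?_)
    rintro ⟨p, rfl⟩
    have : g (ψ p) = none := he_none _
    simp [this] at hx
  · intro f hf hfin
    choose m hm using fun n => hH (n + 1) f hf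
    have hinj : Function.Injective fun n => ψ (n, m n) := fun a b h =>
      (Prod.ext_iff.1 (hψ h)).1
    refine Set.infinite_range_of_injective hinj (hfin.subset ?_)
    rintro _ ⟨n, rfl⟩
    refine ⟨by simp [hg'ψ], ?_⟩
    simpa [hg'ψ, toPartial] using hm n

lemma singleton_mem_mycielski {k : ℕ} (hk : 2 ≤ k) (f : ℕ → Fin k) : {f} ∈ Mycielski k := by
  intro X hX hu
  obtain ⟨x, hx⟩ := hX.nonempty
  have : Nontrivial (Fin k) := Fin.nontrivial_iff_two_le.2 hk
  obtain ⟨c, hc⟩ := exists_ne (f x)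
  have hmem : (fun _ => c) ∈ restrictSet {f} X := hu ▸ Set.mem_univ _
  obtain ⟨f', rfl, h⟩ := hmem
  exact hc (h ⟨x, hx⟩).symm

/-- For every `k ≥ 2`, the Mycielski ideal is contained in the Rosłanowski
ideal, and consequently `cov(ℜ_k) ≤ cov(𝔐_k)`. -/
theorem Mycielski_subset_Ros (k : ℕ) (hk : 2 ≤ k) :
    Mycielski k ⊆ Ros k ∧ covNum (Ros k) ≤ covNum (Mycielski k) := by
  refine ⟨mycielski_subset_ros k, csInf_le_csInf (OrderBot.bddBelow _) ?_ ?_⟩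
  · refine ⟨_, Set.range fun f : ℕ → Fin k => ({f} : Set (ℕ → Fin k)), ?_, ?_, rfl⟩
    · rintro _ ⟨f, rfl⟩
      exact singleton_mem_mycielski hk f
    · exact Set.eq_univ_of_forall fun f => ⟨{f}, ⟨f, rfl⟩, rfl⟩
  · rintro c ⟨S, hS, hcov, hc⟩
    exact ⟨S, hS.trans (mycielski_subset_ros k), hcov, hc⟩
end

section
/- Suppose {A_ξ : ξ < ω₁} is a family of subsets of 2^ω whose union is all of 2^ω, for each ξ < ω₁ the function Φ_ξ witnesses that A_ξ ∈ ℜ_2, and {f_ξ : ξ < ω₁} ⊆ PF_2 is a ⊆*-increasing sequence (f_μ ⊆* f_ν whenever μ ≤ ν < ω₁) such that f_{ξ+1} = Φ_ξ(f_ξ) for every ξ < ω₁. Then the pair of sequences ({f_ξ⁻¹{0}}_{ξ<ω₁}, {f_ξ⁻¹{1}}_{ξ<ω₁}) is a gap: there is no set C ⊆ ω such that for every ξ < ω₁ both f_ξ⁻¹{0} ⊆ C modulo a finite set and f_ξ⁻¹{1} ∩ C is finite. -/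
/-!
A set `C` filling the gap would give the total function `F` equal to `0` on `C` and `1` off `C`,
and then `f ξ ⊆* F` for every `ξ < ω₁`. But `F ∈ A ξ` for some `ξ < ω₁`, so
`f (ξ + 1) = Φ ξ (f ξ) ⊄* F`, while `ξ + 1 < ω₁` because `ω₁` is a limit ordinal.
-/

open Cardinal

/-- Suppose `{A ξ : ξ < ω₁}` covers `2^ω`, each `Φ ξ` witnesses that
`A ξ ∈ ℜ₂` (that is, for every `g ∈ PF 2`, `Φ ξ g ∈ PF 2`, `g ⊆ Φ ξ g`, and
`Φ ξ g ⊄* f` for every `f ∈ A ξ`), and `{f ξ : ξ < ω₁} ⊆ PF 2` is a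
`⊆*`-increasing sequence with `f (ξ+1) = Φ ξ (f ξ)` for every `ξ < ω₁`.
Then the pair `({(f ξ)⁻¹ {0}}, {(f ξ)⁻¹ {1}})` is a gap: no set `C ⊆ ω`
almost contains every `(f ξ)⁻¹ {0}` while meeting every `(f ξ)⁻¹ {1}` only
finitely. -/
theorem gap_of_tower
    (A : Ordinal → Set (ℕ → Fin 2))
    (hcov : ∀ F : ℕ → Fin 2, ∃ ξ < (aleph 1).ord, F ∈ A ξ)
    (Φ : Ordinal → (ℕ → Option (Fin 2)) → (ℕ → Option (Fin 2)))
    (hΦ : ∀ ξ < (aleph 1).ord, ∀ g ∈ PF 2,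
      Φ ξ g ∈ PF 2 ∧ (∀ n v, g n = some v → Φ ξ g n = some v) ∧
        ∀ f ∈ A ξ, ¬ SubStar (Φ ξ g) (toPartial f))
    (f : Ordinal → (ℕ → Option (Fin 2)))
    (hf : ∀ ξ < (aleph 1).ord, f ξ ∈ PF 2)
    (hmono : ∀ μ ν : Ordinal, μ ≤ ν → ν < (aleph 1).ord → SubStar (f μ) (f ν))
    (hsucc : ∀ ξ < (aleph 1).ord, f (ξ + 1) = Φ ξ (f ξ)) :
    ¬ ∃ C : Set ℕ, ∀ ξ < (aleph 1).ord,
        ({x | f ξ x = some 0} \ C).Finite ∧ ({x | f ξ x = some 1} ∩ C).Finite := by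
  classical
  rintro ⟨C, hC⟩
  obtain ⟨ξ, hξ, hA⟩ := hcov (fun n => if n ∈ C then 0 else 1)
  have hlim : Order.IsSuccLimit (aleph 1).ord := isSuccLimit_ord (aleph0_le_aleph 1)
  have hξ' : ξ + 1 < (aleph 1).ord := by
    simpa using hlim.succ_lt hξ
  obtain ⟨h0, h1⟩ := hC (ξ + 1) hξ'
  refine (hΦ ξ hξ (f ξ) (hf ξ hξ)).2.2 _ hA ?_
  rw [← hsucc ξ hξ]
  -- A disagreement with the indicator lies in the `0`-part outside `C` or in the `1`-part inside `C`.
  refine (h0.union h1).subset ?_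
  rintro x ⟨hs, hne⟩
  obtain ⟨v, hv⟩ := Option.isSome_iff_exists.mp hs
  rw [hv] at hne
  by_cases hx : x ∈ C <;> fin_cases v <;> simp_all [toPartial]
end

section
/- Let J ≥ 1 be an integer and let T be a J-branching tree of finite sequences of natural numbers (prefix-closed, every node has at most J immediate successors in T). Then for every i ∈ ω there is a function f : {i, i+1, …, i+J^i−1} → {0,…,J} such that for every infinite branch b of T (every b ∈ ω^ω all of whose finite initial segments lie in T), f differs from the restriction of b to {i, …, i+J^i−1}; that is, f ≠ b↾(i+J^i ∖ i). -/
/-!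
Level `i` of a `J`-branching tree has at most `J ^ i` nodes, so it can be listed as
`e 0, …, e (J ^ i - 1)` (`exists_level_enum`). The `k`-th value of `f`, at position `i + k`, takes
care of the branches through `e k`: among the branches extending `e k`, those that agree with `f`
on `[i, i + k)` all pass through the one node `e k` followed by `f i, …, f (i + k - 1)`. That node
has at most `J` successors, so one of the `J + 1` values `0, …, J` is not a successor
(`exists_le_not_mem`), and choosing it as `f (i + k)` makes `f` differ from each branch through `e k`.
-/

/-- A set of at most `J` naturals is contained in the range of a sequence restricted to indices
below `J`. -/
lemma exists_enum_of_encard_le {S : Set ℕ} {J : ℕ} (h : S.encard ≤ (J : ℕ∞)) :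
    ∃ s : ℕ → ℕ, ∀ m ∈ S, ∃ j < J, s j = m := by
  have hfin : S.Finite := Set.finite_of_encard_le_coe h
  have hcard : hfin.toFinset.card ≤ J := by
    rw [hfin.encard_eq_coe_toFinset_card] at h
    exact_mod_cast h
  refine ⟨fun j => hfin.toFinset.toList.getD j 0, fun m hm => ?_⟩
  have hm' : m ∈ hfin.toFinset.toList := by simpa using hm
  obtain ⟨j, hj, rfl⟩ := List.getElem_of_mem hm'
  refine ⟨j, ?_, List.getD_eq_getElem _ _ hj⟩
  rw [Finset.length_toList] at hj
  omega

lemma exists_le_not_mem {S : Set ℕ} {J : ℕ} (h : S.encard ≤ (J : ℕ∞)) :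
    ∃ m ≤ J, m ∉ S := by
  by_contra! hc
  have hsub : ((Finset.range (J + 1) : Finset ℕ) : Set ℕ) ⊆ S := fun m hm =>
    hc m (by simpa [Nat.lt_succ_iff] using hm)
  have hle := (Set.encard_le_encard hsub).trans h
  rw [Set.encard_coe_eq_coe_finsetCard, Finset.card_range] at hle
  have : J + 1 ≤ J := by exact_mod_cast hle
  omega

lemma exists_level_enum {J : ℕ} {T : Set (List ℕ)}
    (hpref : ∀ s ∈ T, ∀ t : List ℕ, t <+: s → t ∈ T)
    (hbr : ∀ t ∈ T, {m : ℕ | t ++ [m] ∈ T}.encard ≤ (J : ℕ∞)) (i : ℕ) :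
    ∃ e : ℕ → List ℕ, ∀ t ∈ T, t.length = i → ∃ k < J ^ i, e k = t := by
  induction i with
  | zero =>
    exact ⟨fun _ => [], fun t _ ht => ⟨0, by simp, (List.length_eq_zero_iff.mp ht).symm⟩⟩
  | succ i ih =>
    obtain ⟨e, he⟩ := ih
    have hs : ∀ t : List ℕ, ∃ s : ℕ → ℕ, t ∈ T → ∀ m, t ++ [m] ∈ T → ∃ j < J, s j = m := by
      intro t
      by_cases ht : t ∈ T
      · obtain ⟨s, hs⟩ := exists_enum_of_encard_le (hbr t ht)
        exact ⟨s, fun _ m hm => hs m hm⟩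
      · exact ⟨fun _ => 0, fun h => absurd h ht⟩
    choose s hs using hs
    -- The `j`-th successor of the `k`-th node of level `i` receives the index `k * J + j`.
    refine ⟨fun n => e (n / J) ++ [s (e (n / J)) (n % J)], fun t ht hlen => ?_⟩
    obtain rfl | ⟨u, m, rfl⟩ := List.eq_nil_or_concat' t
    · simp at hlen
    have hu : u ∈ T := hpref _ ht u (List.prefix_append u [m])
    obtain ⟨k, hk, rfl⟩ := he u hu (by simpa using hlen)
    obtain ⟨j, hj, rfl⟩ := hs _ hu m ht
    have hdiv : (k * J + j) / J = k := by
      rw [Nat.mul_comm, Nat.mul_add_div (by omega), Nat.div_eq_of_lt hj, Nat.add_zero]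
    have hmod : (k * J + j) % J = j := by
      rw [Nat.mul_comm, Nat.mul_add_mod, Nat.mod_eq_of_lt hj]
    refine ⟨k * J + j, ?_, by simp only [hdiv, hmod]⟩
    calc k * J + j < (k + 1) * J := by rw [Nat.succ_mul]; omega
      _ ≤ J ^ i * J := Nat.mul_le_mul_right J hk
      _ = J ^ (i + 1) := (pow_succ J i).symm

/-- The diagonal sequence: its first `k + 1` values, appended to `e k`, lead out of `T`. -/
lemma exists_diagonal {J : ℕ} {T : Set (List ℕ)}
    (hpref : ∀ s ∈ T, ∀ t : List ℕ, t <+: s → t ∈ T)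
    (hbr : ∀ t ∈ T, {m : ℕ | t ++ [m] ∈ T}.encard ≤ (J : ℕ∞)) (e : ℕ → List ℕ) :
    ∃ g : ℕ → ℕ, ∀ k, g k ≤ J ∧ e k ++ (List.range (k + 1)).map g ∉ T := by
  have hc : ∀ t : List ℕ, ∃ m ≤ J, t ++ [m] ∉ T := by
    intro t
    by_cases ht : t ∈ T
    · exact exists_le_not_mem (hbr t ht)
    · exact ⟨0, Nat.zero_le J, fun h => ht (hpref _ h t (List.prefix_append t [0]))⟩
  choose c hcJ hcT using hc
  -- `P k` is the list of the first `k` values of the sequence under construction.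
  let P : ℕ → List ℕ := fun k => Nat.rec [] (fun k p => p ++ [c (e k ++ p)]) k
  have hP : ∀ k, P k = (List.range k).map fun k => c (e k ++ P k) := by
    intro k
    induction k with
    | zero => rfl
    | succ k ih =>
      rw [List.range_succ, List.map_append, ← ih]
      rfl
  refine ⟨fun k => c (e k ++ P k), fun k => ⟨hcJ _, ?_⟩⟩
  rw [← hP (k + 1)]
  have : P (k + 1) = P k ++ [c (e k ++ P k)] := rfl
  rw [this, ← List.append_assoc]
  exact hcT _

/-- Let `J ≥ 1` and let `T` be a `J`-branching tree of finite sequences of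
natural numbers (prefix-closed, every node has at most `J` immediate
successors).  Then for every `i` there is a function `f` on the interval
`{i, …, i + J^i - 1}` with values in `{0, …, J}` such that for every infinite
branch `b` of `T`, `f` differs from `b` somewhere on that interval. -/
theorem branching_tree_avoid (J : ℕ) (hJ : 1 ≤ J) (T : Set (List ℕ))
    (hpref : ∀ s ∈ T, ∀ t : List ℕ, t <+: s → t ∈ T)
    (hbr : ∀ t ∈ T, {m : ℕ | t ++ [m] ∈ T}.encard ≤ (J : ℕ∞)) :
    ∀ i : ℕ, ∃ f : ℕ → ℕ,
      (∀ x, i ≤ x → x < i + J ^ i → f x ≤ J) ∧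
      ∀ b : ℕ → ℕ, (∀ m : ℕ, (List.ofFn fun j : Fin m => b ↑j) ∈ T) →
        ∃ x, i ≤ x ∧ x < i + J ^ i ∧ f x ≠ b x := by
  intro i
  obtain ⟨e, he⟩ := exists_level_enum hpref hbr i
  obtain ⟨g, hg⟩ := exists_diagonal hpref hbr e
  refine ⟨fun x => g (x - i), fun x _ _ => (hg _).1, fun b hb => ?_⟩
  have hb' : ∀ m, (List.range m).map b ∈ T := by
    intro m
    have : (List.range m).map b = List.ofFn fun j : Fin m => b ↑j :=
      List.ext_getElem (by simp) (by simp)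
    rw [this]
    exact hb m
  obtain ⟨k, hk, hek⟩ := he _ (hb' i) (by simp)
  by_contra! hc
  apply (hg k).2
  have hgb : (List.range (k + 1)).map g = (List.range (k + 1)).map fun x => b (i + x) := by
    refine List.map_congr_left fun x hx => ?_
    have hx' : x < k + 1 := List.mem_range.mp hx
    simpa using hc (i + x) (by omega) (by omega)
  have := hb' (i + (k + 1))
  rw [List.range_add, List.map_append, List.map_map] at this
  rw [hek, hgb]
  exact this
end

section
/- Let k ≥ 2 and let {h_n : n ∈ ω} ⊆ PF_k be a ⊆*-increasing sequence (h_m ⊆* h_n whenever m ≤ n). Let Q = {f ∈ PF_k : f ⊆* h_n for some n ∈ ω}, partially ordered by reverse inclusion (f' is an extension of f if f ⊆ f'). Then Q is σ-centred: Q can be written as a countable union of subsets C_m such that any finitely many members of a single C_m have a common extension in Q. -/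
/-- The partial function that follows the finite sequence `σ` on its length and `g` afterwards. -/
def splice {k : ℕ} (σ : List (Option (Fin k))) (g : ℕ → Option (Fin k)) : ℕ → Option (Fin k) :=
  fun x => if x < σ.length then σ.getD x none else g x

lemma splice_mem_PF {k : ℕ} (σ : List (Option (Fin k))) {g : ℕ → Option (Fin k)}
    (hg : g ∈ PF k) : splice σ g ∈ PF k := by
  have hg' : {n | g n = none}.Infinite := hg
  refine (hg'.sdiff (Set.finite_lt_nat σ.length)).mono ?_
  rintro x ⟨hx, hlt⟩
  have hlt' : ¬ x < σ.length := hlt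
  have hx' : g x = none := hx
  simp [splice, hlt', hx']

lemma splice_subStar {k : ℕ} (σ : List (Option (Fin k))) (g : ℕ → Option (Fin k)) :
    SubStar (splice σ g) g := by
  refine (Set.finite_lt_nat σ.length).subset ?_
  rintro x ⟨-, hx⟩
  by_contra hlt
  have hlt' : ¬ x < σ.length := hlt
  exact hx (by simp [splice, hlt'])

/-- Let `{h n : n ∈ ω} ⊆ PF k` be `⊆*`-increasing and let
`Q = {f ∈ PF k : f ⊆* h n for some n}`, ordered by extension (inclusion of
partial functions).  Then `Q` is σ-centred: it is a countable union of sets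
`C m` such that any finitely many members of a single `C m` have a common
extension in `Q`. -/
theorem tower_forcing_sigmaCentred (k : ℕ) (hk : 2 ≤ k)
    (h : ℕ → (ℕ → Option (Fin k)))
    (hPF : ∀ n, h n ∈ PF k)
    (hmono : ∀ m n : ℕ, m ≤ n → SubStar (h m) (h n)) :
    ∃ C : ℕ → Set (ℕ → Option (Fin k)),
      (∀ m, C m ⊆ {f | f ∈ PF k ∧ ∃ n, SubStar f (h n)}) ∧
      ({f | f ∈ PF k ∧ ∃ n, SubStar f (h n)} ⊆ ⋃ m, C m) ∧
      ∀ m, ∀ s : Finset (ℕ → Option (Fin k)), ↑s ⊆ C m →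
        ∃ q ∈ {f | f ∈ PF k ∧ ∃ n, SubStar f (h n)},
          ∀ p ∈ s, ∀ x : ℕ, ∀ v : Fin k, p x = some v → q x = some v := by
  obtain ⟨e, he⟩ := exists_surjective_nat (ℕ × List (Option (Fin k)))
  -- The piece with index `(n, σ)` is the set of conditions contained in `splice σ (h n)`.
  refine ⟨fun m => {f | (f ∈ PF k ∧ ∃ n, SubStar f (h n)) ∧
    ∀ x v, f x = some v → splice (e m).2 (h (e m).1) x = some v}, fun m f hf => hf.1, ?_, ?_⟩
  · rintro f ⟨hf, n, hn⟩
    obtain ⟨N, hN⟩ := hn.bddAbove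
    obtain ⟨m, hm⟩ := he (n, (List.range (N + 1)).map f)
    refine Set.mem_iUnion.2 ⟨m, ⟨hf, n, hn⟩, fun x v hx => ?_⟩
    rw [hm]
    by_cases hlt : x < N + 1
    · simp [splice, hlt, hx]
    · have hxn : h n x = f x := by
        by_contra hne
        have : x ≤ N := hN ⟨by simp [hx], hne⟩
        omega
      simp [splice, hlt, hxn, hx]
  · intro m s hs
    exact ⟨splice (e m).2 (h (e m).1), ⟨splice_mem_PF _ (hPF _), _, splice_subStar _ _⟩,
      fun p hp => (hs hp).2⟩
end
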